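/- arXiv:1905.08028 — 2 statements merged into one kernel-verified Lean document; each statement's English description precedes it below -/
import Mathlib

section
/- Let I = (a,b) be a bounded open interval, p : I → ℝ a bounded Lebesgue-measurable function, and fix λ₀ ∈ (0,1). Consider the set Ẽ = { x ↦ λ₀^{p(x)} r(p(x)) : r a polynomial with real coefficients } ⊂ L^∞(I) ⊂ L²(I). Then the closure of Ẽ (more precisely, of its linear span) in the L²(I)-norm equals L²(I, σ(p)), the subspace of L²(I) consisting of σ(p)-measurable functions. -/
open MeasureTheory Set

/-!
Every generator is a.e. equal to a Borel function of `p`, hence `σ(p)`-measurable, and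
`L²(σ(p))` is closed; this gives one inclusion.

Conversely, let `h` be continuous. Since the weight `y ↦ λ₀ ^ y` is continuous and positive,
Weierstrass approximation of `h / λ₀ ^ y` on `[-C, C]` shows that `h ∘ p` is a uniform limit
of generators (`comp_continuous_mem_closure`). Continuous functions are dense in `L²` of the
push-forward of the measure under `p`, and composition with `p` is isometric from that space,
so `h ∘ p` lies in the closure for each `h` in it (`comp_memLp_mem_closure`). In particular this
covers the indicators of the sets `p ⁻¹' t`. Every `σ(p)`-measurable set agrees with such a
preimage up to a null set (`exists_preimage_ae_eq`), and indicators of `σ(p)`-measurable sets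
span a dense subspace of `L²(σ(p))`.
-/

/-- `σ(p)`: the smallest sigma-algebra on `I = (a,b)` (realized on `ℝ` carrying the
measure `volume.restrict (Ioo a b)`) that makes `p` measurable and contains the
(measurable) sets of Lebesgue measure zero. -/
def sigmaP (a b : ℝ) (p : ℝ → ℝ) : MeasurableSpace ℝ :=
  MeasurableSpace.comap p Real.measurableSpace ⊔
    MeasurableSpace.generateFrom
      {s : Set ℝ | MeasurableSet s ∧ MeasureTheory.volume.restrict (Set.Ioo a b) s = 0}

/-- The linear span in `L²(μ)` of the classes of `x ↦ l₀ ^ p x * r (p x)`, with `r` a real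
polynomial. -/
def weightedPolySpan (μ : Measure ℝ) (p : ℝ → ℝ) (l₀ : ℝ) : Submodule ℝ (Lp ℝ 2 μ) :=
  Submodule.span ℝ
    {f : Lp ℝ 2 μ | ∃ r : Polynomial ℝ, (f : ℝ → ℝ) =ᵐ[μ] fun x => l₀ ^ p x * r.eval (p x)}

lemma sigmaP_le (a b : ℝ) {p : ℝ → ℝ} (hp : Measurable p) :
    sigmaP a b p ≤ Real.measurableSpace :=
  sup_le hp.comap_le (MeasurableSpace.generateFrom_le fun _ hs => hs.1)

/-- Adjoining the null sets changes the sets of the `σ`-algebra generated by `p` only up to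
null sets. -/
lemma exists_preimage_ae_eq {a b : ℝ} {p : ℝ → ℝ} {s : Set ℝ}
    (hs : MeasurableSet[sigmaP a b p] s) :
    ∃ t, MeasurableSet t ∧ s =ᵐ[volume.restrict (Ioo a b)] p ⁻¹' t := by
  have hle : sigmaP a b p ≤ eventuallyMeasurableSpace
      (MeasurableSpace.comap p Real.measurableSpace) (ae (volume.restrict (Ioo a b))) := by
    refine sup_le le_eventuallyMeasurableSpace (MeasurableSpace.generateFrom_le ?_)
    rintro u ⟨-, hu⟩
    exact ⟨∅, @MeasurableSet.empty _ (_), ae_eq_empty.2 hu⟩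
  obtain ⟨_, ⟨t, ht, rfl⟩, hst⟩ := hle s hs
  exact ⟨t, ht, hst⟩

section Approximation

variable {μ : Measure ℝ} [IsFiniteMeasure μ] {p : ℝ → ℝ} {l₀ C : ℝ}

lemma memLp_comp_of_continuous (hp : Measurable p) (hC : ∀ᵐ x ∂μ, |p x| ≤ C)
    {h : ℝ → ℝ} (hh : Continuous h) : MemLp (h ∘ p) 2 μ := by
  obtain ⟨K, hK⟩ := (isCompact_Icc (a := -C) (b := C)).exists_bound_of_continuousOn hh.continuousOn
  refine MemLp.of_bound (hh.measurable.comp hp).aestronglyMeasurable K ?_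
  filter_upwards [hC] with x hx using hK _ (abs_le.1 hx)

lemma comp_continuous_mem_closure (hp : Measurable p) (hC : ∀ᵐ x ∂μ, |p x| ≤ C)
    (hl₀ : l₀ ∈ Ioo (0 : ℝ) 1) {h : ℝ → ℝ} (hh : Continuous h) (hm : MemLp (h ∘ p) 2 μ) :
    hm.toLp ∈ closure (weightedPolySpan μ p l₀ : Set (Lp ℝ 2 μ)) := by
  have hw : Continuous fun y : ℝ => l₀ ^ y := Real.continuous_const_rpow hl₀.1.ne'
  have hw0 (y : ℝ) : 0 < l₀ ^ y := Real.rpow_pos_of_pos hl₀.1 y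
  rw [Metric.mem_closure_iff]
  intro ε hε
  -- The factor by which the uniform bound is multiplied when passing to the `L²` norm.
  set K : ℝ := (measureUnivNNReal μ : ℝ) ^ (ENNReal.toReal 2)⁻¹ with hK
  have hK0 : 0 ≤ K := by positivity
  set δ : ℝ := ε / (K + 1) with hδ
  have hδ0 : 0 < δ := by positivity
  -- On `[-C, C]` the decreasing weight is at most `l₀ ^ (-C)`.
  obtain ⟨r, hr⟩ := exists_polynomial_near_of_continuousOn (-C) C (fun y => h y / l₀ ^ y)
    (hh.div hw fun y => (hw0 y).ne').continuousOn (δ / l₀ ^ (-C)) (div_pos hδ0 (hw0 _))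
  have hrm : MemLp ((fun y => l₀ ^ y * r.eval y) ∘ p) 2 μ :=
    memLp_comp_of_continuous hp hC (hw.mul r.continuous)
  refine ⟨hrm.toLp, Submodule.subset_span ⟨r, hrm.coeFn_toLp⟩, ?_⟩
  rw [dist_eq_norm, ← MemLp.toLp_sub]
  have hbound : ∀ᵐ x ∂μ, ‖(hm.sub hrm).toLp _ x‖ ≤ δ := by
    filter_upwards [hC, (hm.sub hrm).coeFn_toLp] with x hx hx'
    rw [hx']
    have h1 := hr (p x) (abs_le.1 hx)
    have h2 : l₀ ^ p x ≤ l₀ ^ (-C) :=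
      Real.rpow_le_rpow_of_exponent_ge hl₀.1 hl₀.2.le (abs_le.1 hx).1
    have h3 : h (p x) - l₀ ^ p x * r.eval (p x)
        = -(l₀ ^ p x * (r.eval (p x) - h (p x) / l₀ ^ p x)) := by
      have := (hw0 (p x)).ne'
      field_simp
      ring
    simp only [Pi.sub_apply, Function.comp_apply, Real.norm_eq_abs]
    rw [h3, abs_neg, abs_mul, abs_of_pos (hw0 _)]
    calc _ ≤ l₀ ^ (-C) * (δ / l₀ ^ (-C)) :=
          mul_le_mul h2 h1.le (abs_nonneg _) (hw0 _).le
      _ = δ := mul_div_cancel₀ _ (hw0 _).ne'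
  calc _ ≤ K * δ := Lp.norm_le_of_ae_bound hδ0.le hbound
    _ < (K + 1) * δ := by nlinarith
    _ = ε := mul_div_cancel₀ _ (by positivity)

lemma comp_memLp_mem_closure (hp : Measurable p) (hC : ∀ᵐ x ∂μ, |p x| ≤ C)
    (hl₀ : l₀ ∈ Ioo (0 : ℝ) 1) {h : ℝ → ℝ} (hh : MemLp h 2 (μ.map p)) :
    (hh.comp_of_map hp.aemeasurable).toLp ∈
      closure (weightedPolySpan μ p l₀ : Set (Lp ℝ 2 μ)) := by
  rw [← closure_closure, EMetric.mem_closure_iff]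
  intro ε hε
  obtain ⟨ε', hε', hlt⟩ := exists_between hε
  obtain ⟨g, hg, hgm⟩ := hh.exists_boundedContinuous_eLpNorm_sub_le (by simp) hε'.ne'
  refine ⟨(hgm.comp_of_map hp.aemeasurable).toLp,
    comp_continuous_mem_closure hp hC hl₀ g.continuous _, ?_⟩
  rw [Lp.edist_toLp_toLp]
  -- Composition with `p` preserves the `L²` norm.
  have := eLpNorm_map_measure (p := 2) (hh.sub hgm).aestronglyMeasurable hp.aemeasurable
  exact (this.symm.trans_le hg).trans_lt hlt

end Approximation

/-- The closure in `L²((a,b))` of the linear span of the set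
`Ẽ = { x ↦ λ₀^{p(x)} r(p(x)) : r a real polynomial }` equals `L²((a,b), σ(p))`,
the subspace of (classes of) `σ(p)`-measurable square-integrable functions. -/
theorem closure_span_rpow_poly_eq_lpMeas (a b : ℝ) (hab : a < b) (p : ℝ → ℝ)
    (hp : Measurable p) (hpbdd : ∃ C : ℝ, ∀ x ∈ Set.Ioo a b, |p x| ≤ C)
    (l₀ : ℝ) (hl₀ : l₀ ∈ Set.Ioo (0 : ℝ) 1) :
    closure (↑(Submodule.span ℝ
        {f : Lp ℝ 2 (volume.restrict (Set.Ioo a b)) |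
          ∃ r : Polynomial ℝ,
            (f : ℝ → ℝ) =ᵐ[volume.restrict (Set.Ioo a b)]
              fun x => l₀ ^ p x * r.eval (p x)}) :
      Set (Lp ℝ 2 (volume.restrict (Set.Ioo a b)))) =
    (lpMeas ℝ ℝ (sigmaP a b p) 2 (volume.restrict (Set.Ioo a b)) :
      Set (Lp ℝ 2 (volume.restrict (Set.Ioo a b)))) := by
  obtain ⟨C, hC⟩ := hpbdd
  have hC' : ∀ᵐ x ∂volume.restrict (Ioo a b), |p x| ≤ C :=
    (ae_restrict_iff' measurableSet_Ioo).2 (.of_forall hC)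
  have hle := sigmaP_le a b hp
  apply Subset.antisymm
  · refine closure_minimal (SetLike.coe_subset_coe.2 (Submodule.span_le.2 ?_))
      (isClosed_aestronglyMeasurable hle)
    rintro f ⟨r, hr⟩
    have hpm : Measurable[sigmaP a b p] p :=
      Measurable.mono (comap_measurable p) le_sup_left le_rfl
    have hg : Measurable fun y : ℝ => l₀ ^ y * r.eval y :=
      ((Real.continuous_const_rpow hl₀.1.ne').mul r.continuous).measurable
    exact mem_lpMeas_iff_aestronglyMeasurable.2
      ⟨_, (hg.comp hpm).stronglyMeasurable, hr⟩
  · intro f hf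
    change f ∈ closure (weightedPolySpan (volume.restrict (Ioo a b)) p l₀ : Set (Lp ℝ 2 _))
    refine Lp.induction_stronglyMeasurable hle (by simp)
      (fun f => f ∈ closure
        (weightedPolySpan (volume.restrict (Ioo a b)) p l₀ : Set (Lp ℝ 2 _))) ?_ ?_ ?_ f
      (mem_lpMeas_iff_aestronglyMeasurable.1 hf)
    · intro c s hs hμs
      obtain ⟨t, ht, hst⟩ := exists_preimage_ae_eq hs
      have hh : MemLp (t.indicator fun _ => c) 2 ((volume.restrict (Ioo a b)).map p) :=
        memLp_indicator_const 2 ht c (.inr (measure_ne_top _ _))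
      convert comp_memLp_mem_closure hp hC' hl₀ hh using 1
      rw [Lp.simpleFunc.coe_indicatorConst]
      apply Lp.ext
      refine indicatorConstLp_coeFn.trans (.trans ?_ (MemLp.coeFn_toLp _).symm)
      exact indicator_ae_eq_of_ae_eq_set hst
    · intro f g hf hg _ _ _ hf' hg'
      exact (weightedPolySpan _ p l₀).topologicalClosure.add_mem hf' hg'
    · exact isClosed_closure.preimage continuous_subtype_val
end

section
/- Let I = (a,b) be a bounded open interval, p : I → ℝ a bounded Lebesgue-measurable function, and ρ ∈ L¹(I). Suppose (μ_n) is a strictly monotone sequence of real numbers converging to μ₀ ∈ ℝ such that ∫_a^b e^{μ_n p(x)} ρ(x) dx = 0 for every n. Then for every natural number k, ∫_a^b (p(x))^k e^{μ₀ p(x)} ρ(x) dx = 0; consequently ∫_a^b r(p(x)) e^{μ₀ p(x)} ρ(x) dx = 0 for every polynomial r. -/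
/-!
Write `D k t = ∫ p ^ k * exp (t * p) * ρ`. Since `p` is bounded and `ρ` is integrable,
differentiation under the integral sign gives `(D k)' = D (k + 1)`. The hypothesis says that
`D 0` has zeros arbitrarily close to, but different from, `μ₀`. If `D k` has this property, then
`D k μ₀ = 0` by continuity, and Rolle's theorem between `μ₀` and each nearby zero of `D k` yields
a zero of `D (k + 1)` strictly between them, so `D (k + 1)` has the property too. By induction all
the `D k μ₀` vanish, and the polynomial statement follows by linearity.
-/

open MeasureTheory Set

/-- The integrand of the `k`-th exponential moment is integrable when `p` is bounded. -/
lemma integrable_pow_mul_exp_mul {m : Measure ℝ} {p ρ : ℝ → ℝ} (hp : Measurable p) {C : ℝ}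
    (hC : ∀ᵐ x ∂m, |p x| ≤ C) (hρ : Integrable ρ m) (k : ℕ) (t : ℝ) :
    Integrable (fun x => p x ^ k * Real.exp (t * p x) * ρ x) m := by
  refine hρ.bdd_mul (c := C ^ k * Real.exp (|t| * C)) (by fun_prop) ?_
  filter_upwards [hC] with x hx
  rw [norm_mul, norm_pow, Real.norm_eq_abs, Real.norm_eq_abs, Real.abs_exp]
  have h0 : 0 ≤ C := (abs_nonneg _).trans hx
  have h1 : t * p x ≤ |t| * C := (le_abs_self _).trans (by rw [abs_mul]; gcongr)
  gcongr

/-- Differentiating an exponential moment in the exponent raises its order by one. -/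
lemma hasDerivAt_integral_pow_mul_exp_mul {m : Measure ℝ} {p ρ : ℝ → ℝ} (hp : Measurable p)
    {C : ℝ} (hC : ∀ᵐ x ∂m, |p x| ≤ C) (hρ : Integrable ρ m) (k : ℕ) (t : ℝ) :
    HasDerivAt (fun s => ∫ x, p x ^ k * Real.exp (s * p x) * ρ x ∂m)
      (∫ x, p x ^ (k + 1) * Real.exp (t * p x) * ρ x ∂m) t := by
  refine (hasDerivAt_integral_of_dominated_loc_of_deriv_le
    (F' := fun s x => p x ^ (k + 1) * Real.exp (s * p x) * ρ x)
    (bound := fun x => C ^ (k + 1) * Real.exp ((|t| + 1) * C) * |ρ x|)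
    (Metric.ball_mem_nhds t one_pos)
    (.of_forall fun s => (integrable_pow_mul_exp_mul hp hC hρ k s).aestronglyMeasurable)
    (integrable_pow_mul_exp_mul hp hC hρ k t)
    (integrable_pow_mul_exp_mul hp hC hρ (k + 1) t).aestronglyMeasurable
    ?_ (hρ.abs.const_mul _) ?_).2
  · filter_upwards [hC] with x hx s hs
    have h0 : 0 ≤ C := (abs_nonneg _).trans hx
    have hs' : |s| ≤ |t| + 1 := by
      rw [Metric.mem_ball, Real.dist_eq] at hs
      linarith [abs_sub_abs_le_abs_sub s t]
    have h1 : s * p x ≤ (|t| + 1) * C := (le_abs_self _).trans (by rw [abs_mul]; gcongr)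
    rw [norm_mul, norm_mul, norm_pow, Real.norm_eq_abs, Real.norm_eq_abs, Real.norm_eq_abs,
      Real.abs_exp]
    gcongr
  · refine .of_forall fun x s _ => ?_
    have h := ((((hasDerivAt_id s).mul_const (p x)).exp).const_mul (p x ^ k)).mul_const (ρ x)
    refine h.congr_deriv ?_
    simp only [id]
    ring

/-- If a differentiable function has zeros accumulating at `a`, then by Rolle's theorem so does
its derivative. -/
lemma frequently_deriv_eq_zero {f f' : ℝ → ℝ} (hf : ∀ t, HasDerivAt f (f' t) t) {a : ℝ}
    (h : ∃ᶠ t in nhdsWithin a {a}ᶜ, f t = 0) :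
    f a = 0 ∧ ∃ᶠ t in nhdsWithin a {a}ᶜ, f' t = 0 := by
  have hcont : Continuous f := continuous_iff_continuousAt.2 fun t => (hf t).continuousAt
  have ha : f a = 0 := by
    by_contra hne
    exact h (((hcont.tendsto a).eventually_ne hne).filter_mono nhdsWithin_le_nhds)
  refine ⟨ha, ?_⟩
  rw [frequently_nhdsWithin_iff, Metric.nhds_basis_ball.frequently_iff] at h ⊢
  intro ε hε
  obtain ⟨t, ht, hft, hta⟩ := h ε hε
  rw [Real.ball_eq_Ioo] at ht ⊢
  rcases lt_or_gt_of_ne (show t ≠ a from hta) with hlt | hgt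
  · obtain ⟨c, hc, hc0⟩ := exists_hasDerivAt_eq_zero hlt hcont.continuousOn (hft.trans ha.symm)
      fun x _ => hf x
    exact ⟨c, ⟨ht.1.trans hc.1, by linarith [hc.2]⟩, hc0, hc.2.ne⟩
  · obtain ⟨c, hc, hc0⟩ := exists_hasDerivAt_eq_zero hgt hcont.continuousOn (ha.trans hft.symm)
      fun x _ => hf x
    exact ⟨c, ⟨by linarith [hc.1], hc.2.trans ht.2⟩, hc0, hc.1.ne'⟩

/-- If `ρ ∈ L¹((a,b))`, `p` is bounded measurable, and `∫_a^b e^{μ_n p(x)} ρ(x) dx = 0`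
along a strictly monotone sequence `μ_n → μ₀`, then `∫_a^b p(x)^k e^{μ₀ p(x)} ρ(x) dx = 0`
for every `k`, and hence `∫_a^b r(p(x)) e^{μ₀ p(x)} ρ(x) dx = 0` for every polynomial `r`. -/
theorem moments_vanish_of_data_vanish_on_monotone_sequence (a b : ℝ) (hab : a < b)
    (p ρ : ℝ → ℝ) (hp : Measurable p)
    (hpbdd : ∃ C : ℝ, ∀ x ∈ Set.Ioo a b, |p x| ≤ C)
    (hρ : Integrable ρ (volume.restrict (Set.Ioo a b)))
    (μs : ℕ → ℝ) (hmono : StrictMono μs ∨ StrictAnti μs) (μ₀ : ℝ)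
    (hlim : Filter.Tendsto μs Filter.atTop (nhds μ₀))
    (hD : ∀ n, ∫ x in Set.Ioo a b, Real.exp (μs n * p x) * ρ x = 0) :
    (∀ k : ℕ, ∫ x in Set.Ioo a b, p x ^ k * Real.exp (μ₀ * p x) * ρ x = 0) ∧
    (∀ r : Polynomial ℝ,
      ∫ x in Set.Ioo a b, r.eval (p x) * Real.exp (μ₀ * p x) * ρ x = 0) := by
  obtain ⟨C, hC⟩ := hpbdd
  have hC' : ∀ᵐ x ∂(volume.restrict (Set.Ioo a b)), |p x| ≤ C :=
    (ae_restrict_iff' measurableSet_Ioo).2 (.of_forall hC)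
  have hderiv := hasDerivAt_integral_pow_mul_exp_mul hp hC' hρ
  have hinj : Function.Injective μs := hmono.elim StrictMono.injective StrictAnti.injective
  -- An injective sequence takes the value `μ₀` at most once.
  have hne : ∀ᶠ n in Filter.atTop, μs n ∈ ({μ₀}ᶜ : Set ℝ) := by
    rw [← Nat.cofinite_eq_atTop]
    exact hinj.tendsto_cofinite.eventually (Set.finite_singleton μ₀).compl_mem_cofinite
  have hfreq : ∀ k : ℕ, ∃ᶠ t in nhdsWithin μ₀ {μ₀}ᶜ,
      ∫ x in Set.Ioo a b, p x ^ k * Real.exp (t * p x) * ρ x = 0 := by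
    intro k
    induction k with
    | zero =>
      refine (tendsto_nhdsWithin_iff.2 ⟨hlim, hne⟩).frequently (Filter.Frequently.of_forall ?_)
      intro n
      simpa using hD n
    | succ k ih => exact (frequently_deriv_eq_zero (hderiv k) ih).2
  have hmom : ∀ k : ℕ, ∫ x in Set.Ioo a b, p x ^ k * Real.exp (μ₀ * p x) * ρ x = 0 :=
    fun k => (frequently_deriv_eq_zero (hderiv k) (hfreq k)).1
  refine ⟨hmom, fun r => ?_⟩
  simp_rw [Polynomial.eval_eq_sum_range, Finset.sum_mul, mul_assoc (r.coeff _)]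
  rw [integral_finsetSum _ fun k _ =>
    (integrable_pow_mul_exp_mul hp hC' hρ k μ₀).const_mul (r.coeff k)]
  exact Finset.sum_eq_zero fun k _ => by rw [integral_const_mul, hmom k, mul_zero]
end
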